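/- arXiv:1806.03625 — 2 statements merged into one kernel-verified Lean document; each statement's English description precedes it below -/
import Mathlib

section
/- Let t ≥ 4 be an even integer and let M be a matroid admitting a cyclic (t−1,t)-ordering e_1, e_2, …, e_n with n ≥ 6t−10. Then: (i) for every index i, exactly one of the sets σ[i, i+t−1] = {e_i, …, e_{i+t−1}} and σ[i+1, i+t] = {e_{i+1}, …, e_{i+t}} is a t-element circuit of M; (ii) for every index i, σ[i, i+t−1] is a t-element circuit if and only if it is a t-element cocircuit; and (iii) for all indices i and j with j ≡ i (mod 2), if σ[i, i+t−1] is a t-element circuit then σ[j, j+t−1] is a t-element circuit. -/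
open Set

namespace CyclicArr

variable {α : Type*}

/-- `C` is a circuit of the matroid `M`: a minimal dependent set. -/
def Cct (M : Matroid α) (C : Set α) : Prop := Minimal M.Dep C

/-- The set of `len` consecutive elements `{e_i, e_{i+1}, …, e_{i+len-1}}`
in a cyclic ordering `e`, subscripts mod `n`. -/
def seg {n : ℕ} (e : ZMod n → α) (i : ℤ) (len : ℕ) : Set α :=
  (fun k : ℕ => e ((i + k : ℤ) : ZMod n)) '' Set.Iio len

/-- `e` is a cyclic ordering of (the ground set of) `M`. -/
def CyclicOrd {n : ℕ} (M : Matroid α) (e : ZMod n → α) : Prop :=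
  Function.Injective e ∧ Set.range e = M.E

/-- `e` is a cyclic `(t-1, t)`-ordering of `M`: every `t-1` consecutive elements
are contained in a `t`-element circuit and a `t`-element cocircuit. -/
def CyclicPropOrd {n : ℕ} (M : Matroid α) (t : ℕ) (e : ZMod n → α) : Prop :=
  CyclicOrd M e ∧
  ∀ i : ℤ, (∃ C, Cct M C ∧ C.ncard = t ∧ seg e i (t-1) ⊆ C) ∧
           (∃ C, Cct M✶ C ∧ C.ncard = t ∧ seg e i (t-1) ⊆ C)


def RR (n m a b s : ℤ) : Prop :=
  (m + 1 ≤ s → s ≤ n - m - 1 →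
    ((s ≤ a ∧ a ≤ s + m ∧ n ≤ s + b ∧ s + b ≤ n + m) ∨
     (¬ (s ≤ a ∧ a ≤ s + m) ∧ ¬ (n ≤ s + b ∧ s + b ≤ n + m) ∧ a ≠ s + b ∧ a + n ≠ s + b))) ∧
  (s = m → ((m ≤ a ∧ a ≤ 2 * m) ∨ n ≤ m + b ∨ a = m + b ∨ a + n = m + b)) ∧
  (s = n - m → (n - m ≤ a ∨ (m ≤ b ∧ b ≤ 2 * m) ∨ a = n - m + b ∨ a + m = b))

structure Sys (n m : ℤ) (a b : ℤ → ℤ) : Prop where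
  hm : 1 ≤ m
  hn : 6 * m + 2 ≤ n
  ha : ∀ i, m + 1 ≤ a i ∧ a i ≤ n - 1
  hb : ∀ i, m + 1 ≤ b i ∧ b i ≤ n - 1
  hab : ∀ i j, i ≤ j → j < i + n → RR n m (a i) (b j) (j - i)
  hba : ∀ i j, i ≤ j → j < i + n → RR n m (b i) (a j) (j - i)

theorem Sys.swap {n m : ℤ} {a b : ℤ → ℤ} (h : Sys n m a b) : Sys n m b a :=
  ⟨h.hm, h.hn, h.hb, h.ha, h.hba, h.hab⟩

theorem RR_refl {n m a b s : ℤ} (hm : 1 ≤ m) (hn : 6 * m + 2 ≤ n)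
    (ha : m + 1 ≤ a ∧ a ≤ n - 1) (hb : m + 1 ≤ b ∧ b ≤ n - 1)
    (h : RR n m b a s) : RR n m (n + m - a) (n + m - b) s := by
  unfold RR at *
  obtain ⟨h1, h2, h3⟩ := h
  refine ⟨fun u v => ?_, fun u => ?_, fun u => ?_⟩
  · have := h1 u v
    omega
  · have := h2 u
    omega
  · have := h3 u
    omega

theorem Sys.reflect {n m : ℤ} {a b : ℤ → ℤ} (h : Sys n m a b) :
    Sys n m (fun i => n + m - a (-i - m)) (fun i => n + m - b (-i - m)) := by
  refine ⟨h.hm, h.hn, fun i => ?_, fun i => ?_, fun i j h1 h2 => ?_, fun i j h1 h2 => ?_⟩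
  · have := h.ha (-i - m); omega
  · have := h.hb (-i - m); omega
  · apply RR_refl h.hm h.hn (h.ha _) (h.hb _)
    have := h.hba (-j - m) (-i - m) (by omega) (by omega)
    convert this using 1; omega
  · apply RR_refl h.hm h.hn (h.hb _) (h.ha _)
    have := h.hab (-j - m) (-i - m) (by omega) (by omega)
    convert this using 1; omega

theorem Sys.far {n m : ℤ} {a b : ℤ → ℤ} (h : Sys n m a b) (p : ℤ) :
    b p ≤ 3 * m ∨ n - 2 * m ≤ b p := by
  by_contra hcon
  push Not at hcon
  have hm := h.hm
  have hn := h.hn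
  obtain ⟨q, hq⟩ : ∃ q, q = p - n + b p := ⟨_, rfl⟩
  -- circuits around `q` have their extra element in the window at `p`
  have key : ∀ k, q - m ≤ k → k ≤ q → p - k ≤ a k ∧ a k ≤ p - k + m := by
    intro k h1 h2
    have := (h.hab k p (by omega) (by omega)).1 (by omega) (by omega)
    omega
  have r1 : q + m + b (q + m) = q + a q := by
    have k0 := key q (by omega) (by omega)
    have k1 := key (q - 1) (by omega) (by omega)
    have b0 := h.hb (q + m)
    have e1 := (h.hab q (q + m) (by omega) (by omega)).2.1 (by omega)
    have e2 := (h.hab (q - 1) (q + m) (by omega) (by omega)).1 (by omega) (by omega)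
    omega
  have r2 : q - 2 * m + b (q - 2 * m) = q - m + a (q - m) := by
    have k0 := key (q - m) (by omega) (by omega)
    have k1 := key (q - m + 1) (by omega) (by omega)
    have b0 := h.hb (q - 2 * m)
    have e1 := (h.hba (q - 2 * m) (q - m) (by omega) (by omega)).2.1 (by omega)
    have e2 := (h.hba (q - 2 * m) (q - m + 1) (by omega) (by omega)).1 (by omega) (by omega)
    omega
  have k0 := key q (by omega) (by omega)
  have k1 := key (q - m) (by omega) (by omega)
  have f1 := (h.hba (q + m) p (by omega) (by omega)).1 (by omega) (by omega)
  have f2 := (h.hba (q - 2 * m) p (by omega) (by omega)).1 (by omega) (by omega)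
  omega

theorem Sys.near {n m : ℤ} {a b : ℤ → ℤ} (h : Sys n m a b) (δ : ℤ) (h2 : 2 ≤ δ) (hδ : δ ≤ 2 * m)
    (hb : ∀ i, b i ≤ m + δ ∨ n - δ ≤ b i) (i : ℤ) : a i ≠ m + δ := by
  intro hi
  have hm := h.hm
  have hn := h.hn
  have b1 := hb (i + m + δ)
  have b2 := hb (i - m)
  have c1 := h.hb (i + m + δ)
  have c2 := h.hb (i - m)
  have c3 := h.ha (i + 1)
  have e1 := (h.hab i (i + m + δ) (by omega) (by omega)).1 (by omega) (by omega)
  have e2 := (h.hab (i + 1) (i + m + δ) (by omega) (by omega)).1 (by omega) (by omega)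
  have e3 := (h.hba (i - m) i (by omega) (by omega)).2.1 (by omega)
  have e4 := (h.hba (i - m) (i + 1) (by omega) (by omega)).1 (by omega) (by omega)
  omega

theorem Sys.step {n m : ℤ} {a b : ℤ → ℤ} (h : Sys n m a b) (δ : ℤ) (h2 : 2 ≤ δ) (hδ : δ ≤ 2 * m)
    (ha : ∀ i, a i ≤ m + δ ∨ n - δ ≤ a i) (hb : ∀ i, b i ≤ m + δ ∨ n - δ ≤ b i) (i : ℤ) :
    a i ≤ m + (δ - 1) ∨ n - (δ - 1) ≤ a i := by
  have h1 := h.near δ h2 hδ hb i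
  have h3 := h.reflect.near δ h2 hδ (fun i => by have := hb (-i - m); omega) (-i - m)
  have e : -(-i - m) - m = i := by ring
  simp only [e] at h3
  have := ha i
  omega

theorem Sys.all {n m : ℤ} {a b : ℤ → ℤ} (h : Sys n m a b) (k : ℕ) : (k : ℤ) + 1 ≤ 2 * m →
    (∀ i, a i ≤ m + (2 * m - k) ∨ n - (2 * m - k) ≤ a i) ∧
    (∀ i, b i ≤ m + (2 * m - k) ∨ n - (2 * m - k) ≤ b i) := by
  induction k with
  | zero =>
    intro _
    exact ⟨fun i => by have := h.swap.far i; push_cast; omega,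
      fun i => by have := h.far i; push_cast; omega⟩
  | succ k ih =>
    intro hk
    push_cast at hk ⊢
    obtain ⟨ha, hb⟩ := ih (by omega)
    exact ⟨fun i => by have := h.step _ (by omega) (by omega) ha hb i; omega,
      fun i => by have := h.swap.step _ (by omega) (by omega) hb ha i; omega⟩

theorem Sys.final {n m : ℤ} {a b : ℤ → ℤ} (h : Sys n m a b) (i : ℤ) :
    a i = m + 1 ∨ a i = n - 1 := by
  have hm := h.hm
  have := (h.all (2 * m - 1).toNat (by omega)).1 i
  have := h.ha i
  omega

theorem mem_seg_iff {α : Type*} {n : ℕ} (e : ZMod n → α) (he : Function.Injective e) (i k : ℤ)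
    (len : ℕ) (hl : len ≤ n) (h0 : 0 ≤ k) (hk : k < n) :
    e ((i + k : ℤ) : ZMod n) ∈ seg e i len ↔ k < len := by
  unfold seg
  constructor
  · rintro ⟨l, hl', h⟩
    have hl' : l < len := hl'
    have h := he h
    rw [ZMod.intCast_eq_intCast_iff_dvd_sub] at h
    have h2 : (n : ℤ) ∣ k - l := by
      have e1 : k - l = (i + k) - (i + l) := by ring
      rw [e1]; exact h
    have : k - l = 0 := Int.eq_zero_of_abs_lt_dvd h2 (by rw [abs_lt]; omega)
    omega
  · intro h
    refine ⟨k.toNat, ?_, ?_⟩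
    · show k.toNat < len
      omega
    · show e _ = e _
      rw [Int.toNat_of_nonneg h0]

theorem exists_pos {n : ℕ} (hn : 0 < n) (z : ZMod n) (i : ℤ) :
    ∃ k : ℤ, 0 ≤ k ∧ k < n ∧ z = ((i + k : ℤ) : ZMod n) := by
  haveI : NeZero n := ⟨hn.ne'⟩
  refine ⟨((z - (i : ZMod n)).val : ℤ), by positivity, ?_, ?_⟩
  · exact_mod_cast ZMod.val_lt _
  · push_cast
    rw [ZMod.natCast_zmod_val]
    ring

/-- `C` is the window at `i` of length `m+1` with the element at offset `a` added. -/
def Off {α : Type*} {n : ℕ} (e : ZMod n → α) (m : ℤ) (C : Set α) (i a : ℤ) : Prop :=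
  C ⊆ Set.range e ∧ ∀ k : ℤ, 0 ≤ k → k < n → (e ((i + k : ℤ) : ZMod n) ∈ C ↔ k ≤ m ∨ k = a)

theorem seg_ncard {α : Type*} {n : ℕ} (e : ZMod n → α) (he : Function.Injective e) (i : ℤ)
    (len : ℕ) (hl : len ≤ n) : (seg e i len).ncard = len := by
  unfold seg
  rw [Set.ncard_image_of_injOn, Set.ncard_eq_toFinset_card']
  · simp
  · intro k hk l hl' h
    have hk : k < len := hk
    have hl' : l < len := hl'
    have h := (mem_seg_iff e he i k (l + 1) (by omega) (by omega) (by omega)).1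
      ⟨l, by show l < l + 1; omega, h.symm⟩
    have h' := (mem_seg_iff e he i l (k + 1) (by omega) (by omega) (by omega)).1
      ⟨k, by show k < k + 1; omega, by assumption⟩
    omega

theorem exists_off {α : Type*} {n : ℕ} (e : ZMod n → α) (he : Function.Injective e) (i : ℤ)
    (t : ℕ) (ht : 2 ≤ t) (hn : t ≤ n) (C : Set α) (hC : C ⊆ Set.range e) (hc : C.ncard = t)
    (hs : seg e i (t - 1) ⊆ C) :
    ∃ a : ℤ, ((t : ℤ) - 2 + 1 ≤ a ∧ a ≤ (n : ℤ) - 1) ∧ Off e ((t : ℤ) - 2) C i a := by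
  have hfin : C.Finite := Set.finite_of_ncard_ne_zero (by omega)
  have h1 := seg_ncard e he i (t - 1) (by omega)
  have h2 : (C \ seg e i (t - 1)).ncard = 1 := by
    have := Set.ncard_sdiff_add_ncard_of_subset hs hfin
    omega
  obtain ⟨x, hx⟩ := Set.ncard_eq_one.1 h2
  have hxm : x ∈ C \ seg e i (t - 1) := by rw [hx]; rfl
  obtain ⟨z, rfl⟩ := hC hxm.1
  obtain ⟨a, ha0, han, rfl⟩ := exists_pos (by omega) z i
  have h3 := hxm.2
  rw [mem_seg_iff e he i a _ (by omega) ha0 han] at h3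
  refine ⟨a, by omega, hC, fun k hk0 hkn => ?_⟩
  have hk := mem_seg_iff e he i k (t - 1) (by omega) hk0 hkn
  constructor
  · intro h
    by_cases hks : e ((i + k : ℤ) : ZMod n) ∈ seg e i (t - 1)
    · left
      have := hk.1 hks
      omega
    · right
      have h4 : e ((i + k : ℤ) : ZMod n) ∈ C \ seg e i (t - 1) := ⟨h, hks⟩
      rw [hx] at h4
      have h5 : e ((i + k : ℤ) : ZMod n) = e ((i + a : ℤ) : ZMod n) := h4
      have h6 := (mem_seg_iff e he i k (a.toNat + 1) (by omega) (by omega) (by omega)).1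
        ⟨a.toNat, by show a.toNat < _; omega, by
          show e _ = e _; rw [Int.toNat_of_nonneg ha0, h5]⟩
      have h7 := (mem_seg_iff e he i a (k.toNat + 1) (by omega) (by omega) (by omega)).1
        ⟨k.toNat, by show k.toNat < _; omega, by
          show e _ = e _; rw [Int.toNat_of_nonneg hk0, h5]⟩
      omega
  · rintro (h | rfl)
    · exact hs (hk.2 (by omega))
    · exact hxm.1

theorem off_shift {α : Type*} {n : ℕ} {e : ZMod n → α} {m : ℤ} {C : Set α} {j b : ℤ}
    (h : Off e m C j b) (i k : ℤ) (hij : i ≤ j) (hj : j < i + n) (h0 : 0 ≤ k) (hk : k < n) :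
    e ((i + k : ℤ) : ZMod n) ∈ C ↔
      (j ≤ i + k ∧ (i + k - j ≤ m ∨ i + k - j = b)) ∨
      (i + k < j ∧ (i + k - j + n ≤ m ∨ i + k - j + n = b)) := by
  by_cases hc : j ≤ i + k
  · have := h.2 (i + k - j) (by omega) (by omega)
    rw [show j + (i + k - j) = i + k by ring] at this
    rw [this]; omega
  · have := h.2 (i + k - j + n) (by omega) (by omega)
    rw [show ((j + (i + k - j + n) : ℤ) : ZMod n) = ((i + k : ℤ) : ZMod n) by
      push_cast; simp] at this
    rw [this]; omega

theorem RR_of {α : Type*} {n : ℕ} {e : ZMod n → α} {m : ℤ} {C D : Set α}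
    {i j a b : ℤ} (hm : 1 ≤ m) (hn : 6 * m + 2 ≤ n)
    (ha : m + 1 ≤ a ∧ a ≤ n - 1) (hb : m + 1 ≤ b ∧ b ≤ n - 1)
    (hC : Off e m C i a) (hD : Off e m D j b) (hij : i ≤ j) (hj : j < i + n)
    (h : ∀ x, C ∩ D ≠ {x}) : RR n m a b (j - i) := by
  have core : ∀ k0 : ℤ, 0 ≤ k0 → k0 < n → e ((i + k0 : ℤ) : ZMod n) ∈ C →
      e ((i + k0 : ℤ) : ZMod n) ∈ D → ∃ k : ℤ, 0 ≤ k ∧ k < n ∧ k ≠ k0 ∧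
      e ((i + k : ℤ) : ZMod n) ∈ C ∧ e ((i + k : ℤ) : ZMod n) ∈ D := by
    intro k0 h0 h1 h2 h3
    by_contra hcon
    apply h (e ((i + k0 : ℤ) : ZMod n))
    apply Set.eq_singleton_iff_unique_mem.2
    refine ⟨⟨h2, h3⟩, fun y hy => ?_⟩
    obtain ⟨z, rfl⟩ := hC.1 hy.1
    obtain ⟨k, hk0, hkn, rfl⟩ := exists_pos (by omega) z i
    by_contra hne
    exact hcon ⟨k, hk0, hkn, fun h => hne (by rw [h]), hy.1, hy.2⟩
  have core' : ∀ k0 : ℤ, 0 ≤ k0 → k0 < n → (k0 ≤ m ∨ k0 = a) →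
      ((j ≤ i + k0 ∧ (i + k0 - j ≤ m ∨ i + k0 - j = b)) ∨
      (i + k0 < j ∧ (i + k0 - j + n ≤ m ∨ i + k0 - j + n = b))) →
      ∃ k : ℤ, 0 ≤ k ∧ k < n ∧ k ≠ k0 ∧ (k ≤ m ∨ k = a) ∧
      ((j ≤ i + k ∧ (i + k - j ≤ m ∨ i + k - j = b)) ∨
      (i + k < j ∧ (i + k - j + n ≤ m ∨ i + k - j + n = b))) := by
    intro k0 h0 h1 h2 h3
    obtain ⟨k, u, v, w, x, y⟩ := core k0 h0 h1 ((hC.2 k0 h0 h1).2 h2)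
      ((off_shift hD i k0 hij hj h0 h1).2 h3)
    exact ⟨k, u, v, w, (hC.2 k u v).1 x, (off_shift hD i k hij hj u v).1 y⟩
  clear core hC hD h
  obtain ⟨s, rfl⟩ : ∃ s, j = i + s := ⟨j - i, by ring⟩
  refine ⟨fun h1 h2 => ?_, fun h1 => ?_, fun h1 => ?_⟩
  · by_cases hP : s ≤ a ∧ a ≤ s + m
    · obtain ⟨k, hk⟩ := core' a (by omega) (by omega) (by omega) (by omega)
      omega
    · by_cases hQ : n ≤ s + b ∧ s + b ≤ n + m
      · obtain ⟨k, hk⟩ := core' (s + b - n) (by omega) (by omega) (by omega) (by omega)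
        omega
      · by_contra hcon
        obtain ⟨k, hk⟩ := core' a (by omega) (by omega) (by omega) (by omega)
        omega
  · obtain ⟨k, hk⟩ := core' m (by omega) (by omega) (by omega) (by omega)
    omega
  · obtain ⟨k, hk⟩ := core' 0 (by omega) (by omega) (by omega) (by omega)
    omega

theorem seg_off {α : Type*} {n : ℕ} (e : ZMod n → α) (he : Function.Injective e) (i : ℤ)
    (t : ℕ) (hn : t ≤ n) (ht : 1 ≤ t) : Off e ((t : ℤ) - 2) (seg e i t) i ((t : ℤ) - 1) := by
  refine ⟨?_, fun k h0 h1 => ?_⟩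
  · rintro x ⟨k, -, rfl⟩
    exact ⟨_, rfl⟩
  · rw [mem_seg_iff e he i k t hn h0 h1]; omega

theorem off_ext {α : Type*} {n : ℕ} {e : ZMod n → α} (hn : 0 < n) {C D : Set α}
    (hC : C ⊆ Set.range e) (hD : D ⊆ Set.range e) (i : ℤ)
    (h : ∀ k : ℤ, 0 ≤ k → k < n →
      (e ((i + k : ℤ) : ZMod n) ∈ C ↔ e ((i + k : ℤ) : ZMod n) ∈ D)) : C = D := by
  ext x
  constructor
  · intro hx
    obtain ⟨z, rfl⟩ := hC hx
    obtain ⟨k, hk0, hkn, rfl⟩ := exists_pos hn z i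
    exact (h k hk0 hkn).1 hx
  · intro hx
    obtain ⟨z, rfl⟩ := hD hx
    obtain ⟨k, hk0, hkn, rfl⟩ := exists_pos hn z i
    exact (h k hk0 hkn).2 hx

theorem orth {α : Type*} {M : Matroid α} {C D : Set α} (hC : Cct M C) (hD : Cct M✶ D) (x : α) :
    C ∩ D ≠ {x} :=
  Matroid.IsCircuit.inter_isCocircuit_ne_singleton (M := M) hC hD

theorem one_of {α : Type*} (M : Matroid α) (t n : ℕ) (ht : 4 ≤ t)
    (hn : 6 * t - 10 ≤ n) (e : ZMod n → α) (he : CyclicPropOrd M t e) (i : ℤ) :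
    (Cct M (seg e i t) ∨ Cct M (seg e (i - 1) t)) ∧
    (Cct M✶ (seg e i t) ∨ Cct M✶ (seg e (i - 1) t)) := by
  obtain ⟨⟨hinj, hE⟩, hprop⟩ := he
  choose hc hd using hprop
  choose C hC hCt hCs using hc
  choose D hD hDt hDs using hd
  have hCE : ∀ i, C i ⊆ Set.range e := fun i => by rw [hE]; exact (hC i).prop.subset_ground
  have hDE : ∀ i, D i ⊆ Set.range e := fun i => by rw [hE]; exact (hD i).prop.subset_ground
  choose a ha hCa using fun i => exists_off e hinj i t (by omega) (by omega) (C i) (hCE i) (hCt i)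
    (hCs i)
  choose b hb hDb using fun i => exists_off e hinj i t (by omega) (by omega) (D i) (hDE i) (hDt i)
    (hDs i)
  have hS : Sys n ((t : ℤ) - 2) a b := by
    refine ⟨by omega, by omega, ha, hb, fun i j h1 h2 => ?_, fun i j h1 h2 => ?_⟩
    · exact RR_of (by omega) (by omega) (ha i) (hb j) (hCa i) (hDb j) h1 h2 (orth (hC i) (hD j))
    · exact RR_of (by omega) (by omega) (hb i) (ha j) (hDb i) (hCa j) h1 h2
        (fun x => by rw [Set.inter_comm]; exact orth (hC j) (hD i) x)
  have fin : ∀ (C : Set α) (a : ℤ), Off e ((t : ℤ) - 2) C i a →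
      (a = (t : ℤ) - 2 + 1 ∨ a = n - 1) → C = seg e i t ∨ C = seg e (i - 1) t := by
    intro C a h h'
    rcases h' with h' | h'
    · left
      have h2 := seg_off e hinj i t (by omega) (by omega)
      refine off_ext (by omega) h.1 h2.1 i fun k h0 h1 => ?_
      rw [h.2 k h0 h1, h2.2 k h0 h1]; omega
    · right
      have h2 := seg_off e hinj (i - 1) t (by omega) (by omega)
      refine off_ext (by omega) h.1 h2.1 (i - 1) fun k h0 h1 => ?_
      rw [off_shift h (i - 1) k (by omega) (by omega) h0 h1, h2.2 k h0 h1]; omega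
  constructor
  · rcases fin _ _ (hCa i) (hS.final i) with h | h
    · left; rw [← h]; exact hC i
    · right; rw [← h]; exact hC i
  · rcases fin _ _ (hDb i) (hS.swap.final i) with h | h
    · left; rw [← h]; exact hD i
    · right; rw [← h]; exact hD i

theorem seg_inter {α : Type*} {n : ℕ} (e : ZMod n → α) (he : Function.Injective e) (i : ℤ)
    (t : ℕ) (hn : 2 * t ≤ n) (ht : 1 ≤ t) :
    seg e i t ∩ seg e (i + t - 1) t = {e ((i + ((t : ℤ) - 1) : ℤ) : ZMod n)} := by
  have h1 := seg_off e he i t (by omega) ht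
  have h2 := seg_off e he (i + t - 1) t (by omega) ht
  apply Set.eq_singleton_iff_unique_mem.2
  refine ⟨⟨(h1.2 _ (by omega) (by omega)).2 (by omega),
    (off_shift h2 i _ (by omega) (by omega) (by omega) (by omega)).2 (by omega)⟩, ?_⟩
  intro y hy
  obtain ⟨z, rfl⟩ := h1.1 hy.1
  obtain ⟨k, hk0, hkn, rfl⟩ := exists_pos (by omega) z i
  have h3 := (h1.2 k hk0 hkn).1 hy.1
  have h4 := (off_shift h2 i k (by omega) (by omega) hk0 hkn).1 hy.2
  have : k = (t : ℤ) - 1 := by omega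
  rw [this]

theorem parity_step (W : ℤ → Prop) (h : ∀ i, W i ↔ ¬ W (i + 1)) (i : ℤ) (k : ℕ) :
    W i ↔ W (i + 2 * k) := by
  induction k with
  | zero => simp
  | succ k ih =>
    have h1 := h (i + 2 * k)
    have h2 := h (i + 2 * k + 1)
    rw [show i + 2 * (k : ℤ) + 1 + 1 = i + 2 * ((k + 1 : ℕ) : ℤ) by push_cast; ring] at h2
    tauto

theorem parity_all (W : ℤ → Prop) (h : ∀ i, W i ↔ ¬ W (i + 1)) (i j : ℤ) (hij : j % 2 = i % 2) :
    W i ↔ W j := by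
  rcases le_total i j with hl | hl
  · have := parity_step W h i ((j - i) / 2).toNat
    rwa [show i + 2 * (((j - i) / 2).toNat : ℤ) = j by omega] at this
  · have := parity_step W h j ((i - j) / 2).toNat
    rw [show j + 2 * (((i - j) / 2).toNat : ℤ) = i by omega] at this
    exact this.symm

theorem alt (W V : ℤ → Prop) (t : ℤ) (hW : ∀ i, W i ∨ W (i - 1)) (hV : ∀ i, V i ∨ V (i - 1))
    (h : ∀ i, ¬ (W i ∧ V (i + t - 1))) (i : ℤ) : W i ↔ ¬ W (i + 1) := by
  have h1 := hW (i + 1)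
  have h2 := hV (i + t)
  have h3 := h i
  have h4 := h (i + 1)
  rw [show i + 1 - 1 = i by ring] at h1
  rw [show i + 1 + t - 1 = i + t by ring] at h4
  tauto

theorem alt2 (W V : ℤ → Prop) (t : ℤ) (ht : t % 2 = 0) (hV : ∀ i, V i ∨ V (i - 1))
    (aV : ∀ i, V i ↔ ¬ V (i + 1))
    (h : ∀ i, ¬ (W i ∧ V (i + t - 1))) (i : ℤ) (hi : W i) : V i := by
  have h2 := hV (i + t - 1)
  have h3 := h i
  have h5 := parity_all V aV i (i + t - 1 - 1) (by omega)
  tauto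

/-- With `t ≥ 4` even and `n ≥ 6t-10`: (i) exactly one of two consecutive
windows of `t` consecutive elements is a circuit; (ii) a window is a circuit iff it is a
cocircuit; (iii) circuit windows occur at indices of a fixed parity. -/
theorem statement_2 (M : Matroid α) (t n : ℕ) (ht : 4 ≤ t) (hteven : Even t)
    (hn : 6 * t - 10 ≤ n) (e : ZMod n → α) (he : CyclicPropOrd M t e) :
    (∀ i : ℤ, Xor' (Cct M (seg e i t)) (Cct M (seg e (i + 1) t))) ∧
    (∀ i : ℤ, Cct M (seg e i t) ↔ Cct M✶ (seg e i t)) ∧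
    (∀ i j : ℤ, j % 2 = i % 2 → Cct M (seg e i t) → Cct M (seg e j t)) := by
  have hinj := he.1.1
  have hone := one_of M t n ht hn e he
  have ht2 : (t : ℤ) % 2 = 0 := by
    obtain ⟨r, hr⟩ := hteven
    omega
  have hW : ∀ i : ℤ, Cct M (seg e i t) ∨ Cct M (seg e (i - 1) t) := fun i => (hone i).1
  have hV : ∀ i : ℤ, Cct M✶ (seg e i t) ∨ Cct M✶ (seg e (i - 1) t) := fun i => (hone i).2
  have h1 : ∀ i : ℤ, ¬ (Cct M (seg e i t) ∧ Cct M✶ (seg e (i + t - 1) t)) := fun i h =>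
    orth h.1 h.2 _ (seg_inter e hinj i t (by omega) (by omega))
  have h2 : ∀ i : ℤ, ¬ (Cct M✶ (seg e i t) ∧ Cct M (seg e (i + t - 1) t)) := fun i h =>
    orth h.2 h.1 _ (by rw [Set.inter_comm]; exact seg_inter e hinj i t (by omega) (by omega))
  have aW := alt (fun i => Cct M (seg e i t)) (fun i => Cct M✶ (seg e i t)) t hW hV h1
  have aV := alt (fun i => Cct M✶ (seg e i t)) (fun i => Cct M (seg e i t)) t hV hW h2
  refine ⟨fun i => ?_, fun i => ⟨?_, ?_⟩, fun i j hij => ?_⟩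
  · have := aW i
    simp only [Xor', xor_def]
    tauto
  · exact alt2 (fun i => Cct M (seg e i t)) (fun i => Cct M✶ (seg e i t)) t ht2 hV aV h1 i
  · exact alt2 (fun i => Cct M✶ (seg e i t)) (fun i => Cct M (seg e i t)) t ht2 hW aW h2 i
  · exact (parity_all (fun i => Cct M (seg e i t)) aW i j hij).1

end CyclicArr
end

section
/- Let t ≥ 3 be an integer and let M be a matroid admitting a cyclic (t−1,t)-ordering e_1, e_2, …, e_n with n ≥ 6t−10. (i) Suppose that for some index i the set σ[i, i+t−1] is a t-element circuit of M containing X_i. Then for every index j with j ≡ i (mod 2): every t-element circuit of M containing X_j equals σ[j, j+t−1], and every t-element circuit of M containing X_{j+1} equals σ[j, j+t−1]. (ii) The same statement holds with 'circuit' replaced by 'cocircuit' throughout. -/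
open Set

namespace CyclicArr

variable {α : Type*}

def Orth (n t : ℤ) (R S : ℤ → ℤ → Prop) : Prop :=
  ∀ w j k c d x : ℤ, R j c → S k d → w ≤ j → j + t - 1 ≤ w + n → w ≤ k → k + t - 1 ≤ w + n →
    w ≤ c → c < w + n → w ≤ d → d < w + n →
    (j ≤ x ∧ x < j + t - 1 ∨ x = c) → (k ≤ x ∧ x < k + t - 1 ∨ x = d) →
    ∃ y, y ≠ x ∧ (j ≤ y ∧ y < j + t - 1 ∨ y = c) ∧ (k ≤ y ∧ y < k + t - 1 ∨ y = d)

def Exi (n t : ℤ) (R : ℤ → ℤ → Prop) : Prop :=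
  ∀ w j : ℤ, w ≤ j → j + t - 1 ≤ w + n →
    ∃ c, w ≤ c ∧ c < w + n ∧ R j c ∧ ¬ (j ≤ c ∧ c < j + t - 1)

theorem uniq0 {n t : ℤ} {R S : ℤ → ℤ → Prop} (ht : 3 ≤ t) (hn : 6 * t - 10 ≤ n)
    (ho : Orth n t R S) (hS : Exi n t S) (h0 : R 0 (t - 1)) (c : ℤ)
    (hc1 : -t + 1 ≤ c) (hc2 : c < -t + 1 + n) (hc : R 0 c) (hc3 : ¬ (0 ≤ c ∧ c < t - 1)) :
    c = t - 1 := by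
  obtain ⟨d, d1, d2, d3, d4⟩ := hS (-t+1) (t-1) (by omega) (by omega)
  obtain ⟨y, y1, y2, y3⟩ := ho (-t+1) 0 (t-1) (t-1) d (t-1) h0 d3 (by omega) (by omega) (by omega)
    (by omega) (by omega) (by omega) d1 d2 (by omega) (by omega)
  obtain rfl : y = d := by omega
  by_contra hne
  obtain ⟨z, z1, z2, z3⟩ := ho (-t+1) 0 (t-1) c y y hc d3 (by omega) (by omega) (by omega)
    (by omega) (by omega) (by omega) d1 d2 (by omega) (by omega)
  obtain rfl : z = c := by omega
  obtain ⟨d', e1, e2, e3, e4⟩ := hS (-t+1) t (by omega) (by omega)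
  have h5 : ¬ (0 ≤ d' ∧ d' ≤ t - 1) := by
    intro h
    obtain ⟨x, x1, x2, x3⟩ := ho (-t+1) 0 t (t-1) d' d' h0 e3 (by omega) (by omega) (by omega)
      (by omega) (by omega) (by omega) e1 e2 (by omega) (by omega)
    omega
  obtain ⟨x, x1, x2, x3⟩ := ho (-t+1) 0 t z d' z hc e3 (by omega) (by omega) (by omega)
      (by omega) (by omega) (by omega) e1 e2 (by omega) (by omega)
  omega

theorem uniq1 {n t : ℤ} {R S : ℤ → ℤ → Prop} (ht : 3 ≤ t) (hn : 6 * t - 10 ≤ n)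
    (ho : Orth n t R S) (hS : Exi n t S) (h0 : R 0 (t - 1)) (c : ℤ)
    (hc1 : -t + 1 ≤ c) (hc2 : c < -t + 1 + n) (hc : R 1 c) (hc3 : ¬ (1 ≤ c ∧ c < t)) :
    c = 0 := by
  obtain ⟨d, d1, d2, d3, d4⟩ := hS (-t+1) (-t+2) (by omega) (by omega)
  obtain ⟨y, y1, y2, y3⟩ := ho (-t+1) 0 (-t+2) (t-1) d 0 h0 d3 (by omega) (by omega) (by omega)
    (by omega) (by omega) (by omega) d1 d2 (by omega) (by omega)
  obtain rfl : y = d := by omega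
  by_contra hne
  obtain ⟨z, z1, z2, z3⟩ := ho (-t+1) 1 (-t+2) c y y hc d3 (by omega) (by omega) (by omega)
    (by omega) (by omega) (by omega) d1 d2 (by omega) (by omega)
  obtain rfl : z = c := by omega
  obtain ⟨d', e1, e2, e3, e4⟩ := hS (-t+1) (-t+1) (by omega) (by omega)
  have h5 : ¬ (0 ≤ d' ∧ d' ≤ t - 1) := by
    intro h
    obtain ⟨x, x1, x2, x3⟩ := ho (-t+1) 0 (-t+1) (t-1) d' d' h0 e3 (by omega) (by omega) (by omega)
      (by omega) (by omega) (by omega) e1 e2 (by omega) (by omega)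
    omega
  obtain ⟨x, x1, x2, x3⟩ := ho (-t+1) 1 (-t+1) z d' z hc e3 (by omega) (by omega) (by omega)
      (by omega) (by omega) (by omega) e1 e2 (by omega) (by omega)
  omega

/-- The far case. -/
theorem farCase {n t : ℤ} {R S : ℤ → ℤ → Prop} (ht : 3 ≤ t) (hn : 6 * t - 10 ≤ n)
    (ho : Orth n t R S) (hS : Exi n t S) (hR : Exi n t R) (h0 : R 0 (t - 1)) (c : ℤ)
    (hc1 : t + 2 ≤ c) (hc2 : c ≤ n - 2) (hc : R 2 c) : False := by
  have key : ∀ j, t + 1 ≤ j → j + t - 1 ≤ n → j ≤ c → c < j + t - 1 → S j t := by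
    intro j h1 h2 h3 h4
    obtain ⟨d, d1, d2, d3, d4⟩ := hS 0 j (by omega) (by omega)
    have h5 : ¬ (0 ≤ d ∧ d ≤ t - 1) := by
      intro h
      obtain ⟨x, x1, x2, x3⟩ := ho 0 0 j (t-1) d d h0 d3 (by omega) (by omega) (by omega)
        (by omega) (by omega) (by omega) d1 d2 (by omega) (by omega)
      omega
    obtain ⟨x, x1, x2, x3⟩ := ho 0 2 j c d c hc d3 (by omega) (by omega) (by omega)
        (by omega) (by omega) (by omega) d1 d2 (by omega) (by omega)
    obtain rfl : d = t := by omega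
    exact d3
  obtain ⟨j, j1, j2, j3, j4⟩ : ∃ j, t + 1 ≤ j ∧ j + t ≤ n ∧ j + 1 ≤ c ∧ c < j + t - 1 := by
    by_cases h : t + 1 ≤ c - t + 2
    · exact ⟨c - t + 2, by omega, by omega, by omega, by omega⟩
    · exact ⟨t + 1, by omega, by omega, by omega, by omega⟩
  have s1 := key j (by omega) (by omega) (by omega) (by omega)
  have s2 := key (j+1) (by omega) (by omega) (by omega) (by omega)
  by_cases hj : 2 * t - 1 ≤ j
  · obtain ⟨d, d1, d2, d3, d4⟩ := hR 0 (j - t + 2) (by omega) (by omega)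
    obtain ⟨x, x1, x2, x3⟩ := ho 0 (j-t+2) j d t j d3 s1 (by omega) (by omega) (by omega)
        (by omega) (by omega) (by omega) (by omega) (by omega) (by omega) (by omega)
    obtain rfl : x = d := by omega
    obtain ⟨y, y1, y2, y3⟩ := ho 0 (j-t+2) (j+1) x t x d3 s2 (by omega) (by omega) (by omega)
        (by omega) (by omega) (by omega) (by omega) (by omega) (by omega) (by omega)
    omega
  · obtain ⟨d, d1, d2, d3, d4⟩ := hR t (j + t - 1) (by omega) (by omega)
    obtain ⟨x, x1, x2, x3⟩ := ho t (j+t-1) (j+1) d t (j+t-1) d3 s2 (by omega) (by omega) (by omega)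
        (by omega) (by omega) (by omega) (by omega) (by omega) (by omega) (by omega)
    obtain rfl : x = d := by omega
    obtain ⟨y, y1, y2, y3⟩ := ho t (j+t-1) j x t x d3 s1 (by omega) (by omega) (by omega)
        (by omega) (by omega) (by omega) (by omega) (by omega) (by omega) (by omega)
    omega

/-- The near case. -/
theorem nearCase {n t : ℤ} {R S : ℤ → ℤ → Prop} (ht : 3 ≤ t) (hn : 6 * t - 10 ≤ n)
    (ho : Orth n t R S) (hS : Exi n t S) (hR : Exi n t R) (h0 : R 0 (t - 1))
    (hc : R 2 (-1)) : False := by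
  obtain ⟨w, hw⟩ : ∃ w, w = -2 * t + 3 := ⟨_, rfl⟩
  have s1 : S (-t+1) t := by
    obtain ⟨d, d1, d2, d3, d4⟩ := hS w (-t+1) (by omega) (by omega)
    have h5 : ¬ (0 ≤ d ∧ d ≤ t - 1) := by
      intro h
      obtain ⟨x, x1, x2, x3⟩ := ho w 0 (-t+1) (t-1) d d h0 d3 (by omega) (by omega) (by omega)
        (by omega) (by omega) (by omega) d1 d2 (by omega) (by omega)
      omega
    obtain ⟨x, x1, x2, x3⟩ := ho w 2 (-t+1) (-1) d (-1) hc d3 (by omega) (by omega) (by omega)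
        (by omega) (by omega) (by omega) d1 d2 (by omega) (by omega)
    obtain rfl : d = t := by omega
    exact d3
  have s2 : S t (-1) := by
    obtain ⟨d, d1, d2, d3, d4⟩ := hS w t (by omega) (by omega)
    have h5 : ¬ (0 ≤ d ∧ d ≤ t - 1) := by
      intro h
      obtain ⟨x, x1, x2, x3⟩ := ho w 0 t (t-1) d d h0 d3 (by omega) (by omega) (by omega)
        (by omega) (by omega) (by omega) d1 d2 (by omega) (by omega)
      omega
    obtain ⟨x, x1, x2, x3⟩ := ho w 2 t (-1) d t hc d3 (by omega) (by omega) (by omega)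
        (by omega) (by omega) (by omega) d1 d2 (by omega) (by omega)
    obtain rfl : d = -1 := by omega
    exact d3
  by_cases h3 : t = 3
  · obtain ⟨d, d1, d2, d3, d4⟩ := hR w (-2*t+3) (by omega) (by omega)
    obtain ⟨x, x1, x2, x3⟩ := ho w (-2*t+3) (-t+1) d t (-t+1) d3 s1 (by omega) (by omega) (by omega)
        (by omega) (by omega) (by omega) (by omega) (by omega) (by omega) (by omega)
    obtain ⟨y, y1, y2, y3⟩ := ho w (-2*t+3) t d (-1) d d3 s2 (by omega) (by omega) (by omega)
        (by omega) (by omega) (by omega) (by omega) (by omega) (by omega) (by omega)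
    omega
  obtain ⟨l, l1, l2, l3, l4⟩ := hS w (-t+2) (by omega) (by omega)
  have l5 : 2 ≤ l ∧ l ≤ t - 1 := by
    obtain ⟨x, x1, x2, x3⟩ := ho w 0 (-t+2) (t-1) l 0 h0 l3 (by omega) (by omega) (by omega)
        (by omega) (by omega) (by omega) (by omega) (by omega) (by omega) (by omega)
    obtain ⟨y, y1, y2, y3⟩ := ho w 2 (-t+2) (-1) l (-1) hc l3 (by omega) (by omega) (by omega)
        (by omega) (by omega) (by omega) (by omega) (by omega) (by omega) (by omega)
    omega
  have r4 : R t (-t+1) := by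
    obtain ⟨c, c1, c2, c3, c4⟩ := hR w t (by omega) (by omega)
    obtain ⟨x, x1, x2, x3⟩ := ho w t (-t+1) c t t c3 s1 (by omega) (by omega) (by omega)
        (by omega) (by omega) (by omega) (by omega) (by omega) (by omega) (by omega)
    obtain rfl : c = -t+1 := by
      by_contra hne
      obtain ⟨y, y1, y2, y3⟩ := ho w t (-t+2) c l c c3 l3 (by omega) (by omega) (by omega)
        (by omega) (by omega) (by omega) (by omega) (by omega) (by omega) (by omega)
      omega
    exact c3
  obtain ⟨d, d1, d2, d3, d4⟩ := hS w (-2*t+3) (by omega) (by omega)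
  have d5 : t ≤ d ∧ d ≤ 2 * t - 2 := by
    obtain ⟨y, y1, y2, y3⟩ := ho w t (-2*t+3) (-t+1) d (-t+1) r4 d3 (by omega) (by omega) (by omega)
        (by omega) (by omega) (by omega) (by omega) (by omega) (by omega) (by omega)
    omega
  obtain ⟨c, c1, c2, c3, c4⟩ := hR w (-t+1) (by omega) (by omega)
  have c5 : t ≤ c ∧ c ≤ 2 * t - 2 := by
    obtain ⟨y, y1, y2, y3⟩ := ho w (-t+1) t c (-1) (-1) c3 s2 (by omega) (by omega) (by omega)
        (by omega) (by omega) (by omega) (by omega) (by omega) (by omega) (by omega)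
    omega
  have c6 : c = d := by
    obtain ⟨y, y1, y2, y3⟩ := ho w (-t+1) (-2*t+3) c d (-t+1) c3 d3 (by omega) (by omega) (by omega)
        (by omega) (by omega) (by omega) (by omega) (by omega) (by omega) (by omega)
    omega
  subst c6
  obtain ⟨k, k1, k2, k3, k4⟩ := hS w (t-1) (by omega) (by omega)
  have k5 : 0 ≤ k ∧ k ≤ t - 2 := by
    obtain ⟨y, y1, y2, y3⟩ := ho w 0 (t-1) (t-1) k (t-1) h0 k3 (by omega) (by omega) (by omega)
        (by omega) (by omega) (by omega) (by omega) (by omega) (by omega) (by omega)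
    omega
  have c7 : c = 2 * t - 2 := by
    by_contra hne
    obtain ⟨y, y1, y2, y3⟩ := ho w (-t+1) (t-1) c k c c3 k3 (by omega) (by omega) (by omega)
        (by omega) (by omega) (by omega) (by omega) (by omega) (by omega) (by omega)
    omega
  obtain ⟨b, b1, b2, b3, b4⟩ := hR w (2*t-2) (by omega) (by omega)
  obtain ⟨y, y1, y2, y3⟩ := ho w (2*t-2) t b (-1) (2*t-2) b3 s2 (by omega) (by omega) (by omega)
        (by omega) (by omega) (by omega) (by omega) (by omega) (by omega) (by omega)
  obtain ⟨z, z1, z2, z3⟩ := ho w (2*t-2) (-2*t+3) b c (2*t-2) b3 d3 (by omega) (by omega) (by omega)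
        (by omega) (by omega) (by omega) (by omega) (by omega) (by omega) (by omega)
  omega

theorem step2 {n t : ℤ} {R S : ℤ → ℤ → Prop} (ht : 3 ≤ t) (hn : 6 * t - 10 ≤ n)
    (ho : Orth n t R S) (hS : Exi n t S) (hR : Exi n t R) (h0 : R 0 (t - 1))
    (hper : R 2 (n-1) → R 2 (-1)) (hsh : R 2 1 → R 1 t) : R 2 (t + 1) := by
  obtain ⟨c, c1, c2, c3, c4⟩ := hR 0 2 (by omega) (by omega)
  by_cases h1 : c = t + 1
  · rwa [← h1]
  exfalso
  have h2 : c ≠ 1 := by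
    rintro rfl
    have := uniq1 ht hn ho hS h0 t (by omega) (by omega) (hsh c3) (by omega)
    omega
  have h3 : c ≠ n - 1 := by
    rintro rfl
    exact nearCase ht hn ho hS hR h0 (hper c3)
  have h4 : c ≠ 0 := by
    rintro rfl
    obtain ⟨d, d1, d2, d3, d4⟩ := hS 0 t (by omega) (by omega)
    have h5 : ¬ (0 ≤ d ∧ d ≤ t - 1) := by
      intro h
      obtain ⟨x, x1, x2, x3⟩ := ho 0 0 t (t-1) d d h0 d3 (by omega) (by omega) (by omega)
        (by omega) (by omega) (by omega) d1 d2 (by omega) (by omega)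
      omega
    obtain ⟨x, x1, x2, x3⟩ := ho 0 2 t 0 d t c3 d3 (by omega) (by omega) (by omega)
        (by omega) (by omega) (by omega) d1 d2 (by omega) (by omega)
    omega
  exact farCase ht hn ho hS hR h0 c (by omega) (by omega) c3

theorem mem_seg {n : ℕ} (e : ZMod n → α) (i : ℤ) (len : ℕ) (x : α) :
    x ∈ seg e i len ↔ ∃ a : ℤ, i ≤ a ∧ a < i + len ∧ e (a : ZMod n) = x := by
  constructor
  · rintro ⟨k, hk, rfl⟩
    have hk' : k < len := hk
    exact ⟨i + k, by omega, by omega, rfl⟩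
  · rintro ⟨a, h1, h2, rfl⟩
    refine ⟨(a - i).toNat, ?_, ?_⟩
    · show (a - i).toNat < len
      omega
    · show e ((i + ((a - i).toNat : ℕ) : ℤ) : ZMod n) = _
      congr 2
      omega

theorem inj_win {n : ℕ} {e : ZMod n → α} (he : Function.Injective e) {w a b : ℤ}
    (h : e (a : ZMod n) = e (b : ZMod n)) (ha : w ≤ a) (ha' : a < w + n) (hb : w ≤ b)
    (hb' : b < w + n) : a = b := by
  have h1 := (ZMod.intCast_eq_intCast_iff_dvd_sub _ _ _).1 (he h)
  have h2 := Int.eq_zero_of_abs_lt_dvd h1 (by rw [abs_lt]; constructor <;> omega)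
  omega

theorem exists_win {n : ℕ} (hn : 0 < n) (e : ZMod n → α) (w : ℤ) {x : α}
    (hx : x ∈ Set.range e) : ∃ a : ℤ, w ≤ a ∧ a < w + n ∧ e (a : ZMod n) = x := by
  obtain ⟨z, rfl⟩ := hx
  obtain ⟨b, rfl⟩ := ZMod.intCast_surjective z
  have hn' : (0 : ℤ) < n := by exact_mod_cast hn
  refine ⟨w + (b - w) % n, ?_, ?_, ?_⟩
  · have := Int.emod_nonneg (b - w) hn'.ne'
    omega
  · have := Int.emod_lt_of_pos (b - w) hn'
    omega
  · congr 1
    rw [ZMod.intCast_eq_intCast_iff_dvd_sub]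
    have := Int.emod_add_mul_ediv (b - w) n
    exact ⟨(b - w) / n, by linarith⟩

theorem ncard_seg {n : ℕ} {e : ZMod n → α} (he : Function.Injective e) (i : ℤ) (len : ℕ)
    (h : len ≤ n) : (seg e i len).ncard = len := by
  unfold seg
  rw [Set.InjOn.ncard_image]
  · rw [Set.ncard_eq_toFinset_card']
    simp
  · intro a ha b hb hab
    have ha' : a < len := ha
    have hb' : b < len := hb
    have := inj_win he (w := i) (a := i + a) (b := i + b) hab (by omega) (by omega) (by omega)
      (by omega)
    omega

/-- A `t`-set containing a `(t-1)`-segment is an insertion. -/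
theorem exists_insert {n t : ℕ} {e : ZMod n → α} (he : Function.Injective e) (ht : 3 ≤ t)
    (htn : t ≤ n) (w j : ℤ) {C : Set α} (hC : C ⊆ Set.range e) (hcard : C.ncard = t)
    (hs : seg e j (t - 1) ⊆ C) :
    ∃ c : ℤ, w ≤ c ∧ c < w + n ∧ e (c : ZMod n) ∉ seg e j (t - 1) ∧
      C = insert (e (c : ZMod n)) (seg e j (t - 1)) := by
  have hfin : C.Finite := Set.finite_of_ncard_ne_zero (by omega)
  have h1 := Set.ncard_sdiff_add_ncard_of_subset hs hfin
  rw [ncard_seg he j (t-1) (by omega)] at h1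
  have h2 : (C \ seg e j (t - 1)).ncard = 1 := by omega
  obtain ⟨x, hx⟩ := Set.ncard_eq_one.1 h2
  have hxm : x ∈ C \ seg e j (t - 1) := by rw [hx]; rfl
  obtain ⟨c, c1, c2, rfl⟩ := exists_win (by omega) e w (hC hxm.1)
  refine ⟨c, c1, c2, hxm.2, ?_⟩
  rw [← Set.sdiff_union_of_subset hs, hx]
  rfl

theorem insert_last {n t : ℕ} (ht : 3 ≤ t) (e : ZMod n → α) (i c : ℤ) (hc : c = i + t - 1) :
    insert (e (c : ZMod n)) (seg e i (t - 1)) = seg e i t := by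
  subst hc
  ext x
  simp only [Set.mem_insert_iff, mem_seg]
  constructor
  · rintro (rfl | ⟨a, h1, h2, rfl⟩)
    · exact ⟨_, by omega, by omega, rfl⟩
    · exact ⟨a, by omega, by omega, rfl⟩
  · rintro ⟨a, h1, h2, rfl⟩
    by_cases h : a = i + t - 1
    · left; rw [h]
    · right; exact ⟨a, by omega, by omega, rfl⟩

theorem insert_first {n t : ℕ} (ht : 3 ≤ t) (e : ZMod n → α) (i k : ℤ) (hk : k = i + 1) :
    insert (e (i : ZMod n)) (seg e k (t - 1)) = seg e i t := by
  subst hk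
  ext x
  simp only [Set.mem_insert_iff, mem_seg]
  constructor
  · rintro (rfl | ⟨a, h1, h2, rfl⟩)
    · exact ⟨_, by omega, by omega, rfl⟩
    · exact ⟨a, by omega, by omega, rfl⟩
  · rintro ⟨a, h1, h2, rfl⟩
    by_cases h : a = i
    · left; rw [h]
    · right; exact ⟨a, by omega, by omega, rfl⟩

/-- The relation on integers attached to a family of sets. -/
def Rel {n : ℕ} (P : Set α → Prop) (e : ZMod n → α) (t : ℕ) (i j c : ℤ) : Prop :=
  P (insert (e ((i + c : ℤ) : ZMod n)) (seg e (i + j) (t - 1)))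

theorem exi_rel {n t : ℕ} {e : ZMod n → α} (he : Function.Injective e) (ht : 3 ≤ t)
    (htn : t ≤ n) (P : Set α → Prop) (hP : ∀ C, P C → C ⊆ Set.range e)
    (hex : ∀ i : ℤ, ∃ C, P C ∧ C.ncard = t ∧ seg e i (t - 1) ⊆ C) (i : ℤ) :
    Exi n t (Rel P e t i) := by
  intro w j _ _
  obtain ⟨C, h1, h2, h3⟩ := hex (i + j)
  obtain ⟨c, c1, c2, c3, rfl⟩ := exists_insert he ht htn (i + w) (i + j) (hP C h1) h2 h3
  refine ⟨c - i, by omega, by omega, ?_, ?_⟩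
  · unfold Rel
    rwa [add_sub_cancel]
  · rintro ⟨h4, h5⟩
    exact c3 ((mem_seg _ _ _ _).2 ⟨c, by omega, by omega, rfl⟩)

theorem orth_rel {n t : ℕ} {e : ZMod n → α} (he : Function.Injective e) (ht : 3 ≤ t)
    (P Q : Set α → Prop) (hPQ : ∀ C D x, P C → Q D → C ∩ D ≠ {x}) (i : ℤ) :
    Orth n t (Rel P e t i) (Rel Q e t i) := by
  intro w j k c d x hR hS h1 h2 h3 h4 h5 h6 h7 h8 hx1 hx2
  have memI : ∀ j c x : ℤ, (j ≤ x ∧ x < j + t - 1 ∨ x = c) →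
      e ((i + x : ℤ) : ZMod n) ∈ insert (e ((i + c : ℤ) : ZMod n)) (seg e (i + j) (t - 1)) := by
    rintro j c x (⟨h, h'⟩ | rfl)
    · right
      exact (mem_seg _ _ _ _).2 ⟨i + x, by omega, by omega, rfl⟩
    · left; rfl
  have memE : ∀ (j c : ℤ) (z : α), w ≤ j → j + t - 1 ≤ w + n → w ≤ c → c < w + n →
      z ∈ insert (e ((i + c : ℤ) : ZMod n)) (seg e (i + j) (t - 1)) →
      ∃ y : ℤ, w ≤ y ∧ y < w + n ∧ e ((i + y : ℤ) : ZMod n) = z ∧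
        (j ≤ y ∧ y < j + t - 1 ∨ y = c) := by
    intro j c z g1 g2 g3 g4 hz
    rcases hz with rfl | hz
    · exact ⟨c, g3, g4, rfl, Or.inr rfl⟩
    · obtain ⟨a, a1, a2, rfl⟩ := (mem_seg _ _ _ _).1 hz
      exact ⟨a - i, by omega, by omega, by rw [add_sub_cancel], by omega⟩
  by_contra hcon
  push Not at hcon
  apply hPQ _ _ (e ((i + x : ℤ) : ZMod n)) hR hS
  apply Set.Subset.antisymm
  · rintro z ⟨hz1, hz2⟩
    obtain ⟨y, y1, y2, rfl, y4⟩ := memE j c z h1 h2 h5 h6 hz1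
    obtain ⟨y', y1', y2', y3', y4'⟩ := memE k d _ h3 h4 h7 h8 hz2
    have := inj_win he (w := i + w) y3' (by omega) (by omega) (by omega) (by omega)
    obtain rfl : y' = y := by omega
    by_cases hyx : y' = x
    · rw [hyx]; rfl
    · have := hcon y' hyx y4
      omega
  · rintro z rfl
    exact ⟨memI _ _ _ hx1, memI _ _ _ hx2⟩

theorem half {n t : ℕ} {e : ZMod n → α} (he : Function.Injective e) (ht : 3 ≤ t)
    (hn : 6 * t - 10 ≤ n) (P Q : Set α → Prop) (hP : ∀ C, P C → C ⊆ Set.range e)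
    (hQ : ∀ C, Q C → C ⊆ Set.range e)
    (hexP : ∀ i : ℤ, ∃ C, P C ∧ C.ncard = t ∧ seg e i (t - 1) ⊆ C)
    (hexQ : ∀ i : ℤ, ∃ C, Q C ∧ C.ncard = t ∧ seg e i (t - 1) ⊆ C)
    (hPQ : ∀ C D x, P C → Q D → C ∩ D ≠ {x}) (i : ℤ) (hi : P (seg e i t)) (j : ℤ)
    (hij : j % 2 = i % 2) :
    (∀ C : Set α, P C → C.ncard = t → seg e j (t - 1) ⊆ C → C = seg e j t) ∧
    (∀ C : Set α, P C → C.ncard = t → seg e (j + 1) (t - 1) ⊆ C → C = seg e j t) := by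
  have htn : t ≤ n := by omega
  have ht' : (3 : ℤ) ≤ t := by exact_mod_cast ht
  have hn' : 6 * (t : ℤ) - 10 ≤ n := by omega
  have ho := orth_rel he ht P Q hPQ
  have hR := exi_rel he ht htn P hP hexP
  have hS := exi_rel he ht htn Q hQ hexQ
  have h0 : ∀ i, P (seg e i t) → Rel P e t i 0 (t - 1) := by
    intro i hi
    unfold Rel
    rw [add_zero, insert_last ht _ _ _ (by ring)]
    exact hi
  have step : ∀ i, P (seg e i t) → P (seg e (i + 2) t) := by
    intro i hi
    have := step2 ht' hn' (ho i) (hS i) (hR i) (h0 i hi) ?_ ?_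
    · unfold Rel at this
      rwa [insert_last ht _ _ _ (by ring)] at this
    · unfold Rel
      have : ((i + ((n : ℤ) - 1) : ℤ) : ZMod n) = ((i + (-1) : ℤ) : ZMod n) := by
        push_cast
        simp
      rw [this]
      exact id
    · unfold Rel
      rw [insert_first ht _ _ _ (by ring), insert_last ht _ _ _ (by ring)]
      exact id
  have up : ∀ m : ℕ, P (seg e (i + 2 * m) t) := by
    intro m
    induction m with
    | zero => simpa using hi
    | succ m ih =>
      have := step _ ih
      convert this using 2
      push_cast
      ring
  have hj : P (seg e j t) := by
    obtain ⟨q, hq⟩ : ∃ q : ℤ, j = i + 2 * q := ⟨(j - i) / 2, by omega⟩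
    have h1 := up (q + n * |q|).toNat
    have h2 : 0 ≤ q + n * |q| := by
      have : (1 : ℤ) ≤ n := by omega
      have h3 := neg_abs_le q
      nlinarith [abs_nonneg q]
    rw [Int.toNat_of_nonneg h2] at h1
    have h3 : seg e j t = seg e (i + 2 * (q + n * |q|)) t := by
      unfold seg
      congr 1
      funext k
      congr 1
      subst hq
      push_cast
      simp
    rwa [h3]
  constructor
  · intro C hC hcard hs
    obtain ⟨c, c1, c2, c3, rfl⟩ := exists_insert he ht htn (j + (-t + 1)) j (hP C hC) hcard hs
    have h5 : Rel P e t j 0 (c - j) := by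
      unfold Rel
      rwa [add_sub_cancel, add_zero]
    have := uniq0 ht' hn' (ho j) (hS j) (h0 j hj) (c - j) (by omega) (by omega) h5
      (fun h => c3 ((mem_seg _ _ _ _).2 ⟨c, by omega, by omega, rfl⟩))
    exact insert_last ht _ _ _ (by omega)
  · intro C hC hcard hs
    obtain ⟨c, c1, c2, c3, rfl⟩ :=
      exists_insert he ht htn (j + (-t + 1)) (j + 1) (hP C hC) hcard hs
    have h5 : Rel P e t j 1 (c - j) := by
      unfold Rel
      rwa [add_sub_cancel]
    have := uniq1 ht' hn' (ho j) (hS j) (h0 j hj) (c - j) (by omega) (by omega) h5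
      (fun h => c3 ((mem_seg _ _ _ _).2 ⟨c, by omega, by omega, rfl⟩))
    obtain rfl : c = j := by omega
    exact insert_first ht _ _ _ rfl

/-- With `t ≥ 3` and `n ≥ 6t-10`: (i) if `σ[i, i+t-1]` is a `t`-element
circuit, then for every `j ≡ i (mod 2)`, every `t`-element circuit containing `X_j` equals
`σ[j, j+t-1]`, and every `t`-element circuit containing `X_{j+1}` equals `σ[j, j+t-1]`;
(ii) the same with circuits replaced by cocircuits. -/
theorem statement_6 (M : Matroid α) (t n : ℕ) (ht : 3 ≤ t) (hn : 6 * t - 10 ≤ n)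
    (e : ZMod n → α) (he : CyclicPropOrd M t e) :
    (∀ i : ℤ, Cct M (seg e i t) →
      ∀ j : ℤ, j % 2 = i % 2 →
        (∀ C : Set α, Cct M C → C.ncard = t → seg e j (t - 1) ⊆ C → C = seg e j t) ∧
        (∀ C : Set α, Cct M C → C.ncard = t → seg e (j + 1) (t - 1) ⊆ C → C = seg e j t)) ∧
    (∀ i : ℤ, Cct M✶ (seg e i t) →
      ∀ j : ℤ, j % 2 = i % 2 →
        (∀ C : Set α, Cct M✶ C → C.ncard = t → seg e j (t - 1) ⊆ C → C = seg e j t) ∧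
        (∀ C : Set α, Cct M✶ C → C.ncard = t → seg e (j + 1) (t - 1) ⊆ C → C = seg e j t)) := by
  obtain ⟨⟨hinj, hran⟩, hex⟩ := he
  have hP : ∀ C, Cct M C → C ⊆ Set.range e := fun C hC => hran ▸ hC.prop.subset_ground
  have hQ : ∀ C, Cct M✶ C → C ⊆ Set.range e := fun C hC => hran ▸ hC.prop.subset_ground
  have hPQ : ∀ C D x, Cct M C → Cct M✶ D → C ∩ D ≠ {x} := fun C D x hC hD =>
    Matroid.IsCircuit.inter_isCocircuit_ne_singleton (M := M) hC hD
  refine ⟨fun i hi j hij => ?_, fun i hi j hij => ?_⟩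
  · exact half hinj ht hn (Cct M) (Cct M✶) hP hQ (fun i => (hex i).1) (fun i => (hex i).2)
      hPQ i hi j hij
  · exact half hinj ht hn (Cct M✶) (Cct M) hQ hP (fun i => (hex i).2) (fun i => (hex i).1)
      (fun C D x hC hD => by rw [Set.inter_comm]; exact hPQ D C x hD hC) i hi j hij

end CyclicArr
end
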